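/- If D and C are finite oriented graphs such that D is not C-colourable, then for every positive integer ℓ there exists a finite oriented graph D* of girth at least ℓ that is D-colourable but not C-colourable. -/

import Mathlib

/-- An oriented graph on vertex type `V`: a loopless digraph in which for every pair of
vertices at most one of the two opposite arcs is present, encoded as an irreflexive,
asymmetric adjacency relation. -/
structure OrientedGraph (V : Type) where
  Adj : V → V → Prop
  irrefl : ∀ v, ¬ Adj v v
  asymm : ∀ u v, Adj u v → ¬ Adj v u

/-- `f` is a homomorphism of oriented graphs from `D` to `C` (a `C`-colouring of `D`):
it maps arcs to arcs. -/
def IsHom {V W : Type} (D : OrientedGraph V) (C : OrientedGraph W) (f : V → W) : Prop :=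
  ∀ ⦃x y⦄, D.Adj x y → C.Adj (f x) (f y)

/-- The oriented graph `G` has a directed cycle of length `m`: `m` distinct vertices
cyclically joined by arcs. -/
def HasCycleOfLength {V : Type} (G : OrientedGraph V) (m : ℕ) : Prop :=
  ∃ c : ZMod m → V, Function.Injective c ∧ ∀ i, G.Adj (c i) (c (i + 1))

/-- The girth of `G` (the length of a shortest directed cycle, infinite if none) is at
least `ℓ`: there is no directed cycle of length less than `ℓ`. -/
def GirthAtLeast {V : Type} (G : OrientedGraph V) (ℓ : ℕ) : Prop :=
  ∀ m : ℕ, 0 < m → m < ℓ → ¬ HasCycleOfLength G m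

/-- The girth of `G` is exactly `ℓ`: there is a directed cycle of length `ℓ` and none
shorter. -/
def GirthEq {V : Type} (G : OrientedGraph V) (ℓ : ℕ) : Prop :=
  HasCycleOfLength G ℓ ∧ GirthAtLeast G ℓ

/-- `f` is an automorphism of the oriented graph `D`. -/
def IsAuto {V : Type} (D : OrientedGraph V) (f : V → V) : Prop :=
  Function.Bijective f ∧ ∀ x y, D.Adj x y ↔ D.Adj (f x) (f y)

/-- `D` is a core: every homomorphism from `D` to itself is an automorphism. -/
def IsCore {V : Type} (D : OrientedGraph V) : Prop :=
  ∀ f : V → V, IsHom D D f → IsAuto D f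

/-- `C` is `D`-pointed: there do not exist two distinct `C`-colourings of `D` that agree
on all but one vertex of `D`. -/
def IsPointedOf {VC VD : Type} (C : OrientedGraph VC) (D : OrientedGraph VD) : Prop :=
  ¬ ∃ f g : VD → VC, IsHom D C f ∧ IsHom D C g ∧ f ≠ g ∧
      ∃ v : VD, ∀ u : VD, u ≠ v → f u = g u

/-- `T` is a tournament: between any two distinct vertices there is an arc. -/
def IsTournament {V : Type} (T : OrientedGraph V) : Prop :=
  ∀ u v : V, u ≠ v → T.Adj u v ∨ T.Adj v u

/-- The oriented chromatic number of `D`: the minimum number of vertices of an oriented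
graph `C` such that there exists a homomorphism from `D` to `C`. -/
noncomputable def orientedChromaticNumber {V : Type} (D : OrientedGraph V) : ℕ :=
  sInf {k : ℕ | ∃ C : OrientedGraph (Fin k), ∃ f : V → Fin k, IsHom D C f}

/-! Cycles are directed, so an acyclic graph has infinite girth, and it suffices to unroll `D` into
an acyclic graph that is still not `C`-colourable. Take copies of `V` indexed by a linear order `I`,
with an arc from `(u, i)` to `(v, j)` whenever `u → v` in `D` and `i < j`. A `C`-colouring of this
graph restricts to a map `V → W` on each layer. If layers `i < j` restrict to the same map `f`, then
the arcs between these two layers witness that `f` is a `C`-colouring of `D`. Hence there is no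
colouring once `I` has more elements than there are maps `V → W`. -/

theorem IsHom.comp {U V W : Type} {G : OrientedGraph U} {H : OrientedGraph V}
    {K : OrientedGraph W} {g : V → W} {f : U → V} (hg : IsHom H K g) (hf : IsHom G H f) :
    IsHom G K (g ∘ f) :=
  fun _ _ h => hg (hf h)

theorem GirthAtLeast.of_injective_isHom {U V : Type} {G : OrientedGraph U} {H : OrientedGraph V}
    {f : U → V} {ℓ : ℕ} (hH : GirthAtLeast H ℓ) (hf : IsHom G H f) (hinj : Function.Injective f) :
    GirthAtLeast G ℓ :=
  fun m hm hmℓ ⟨c, hc, hadj⟩ => hH m hm hmℓ ⟨f ∘ c, hinj.comp hc, fun i => hf (hadj i)⟩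

theorem girthAtLeast_of_adj_imp_lt {V I : Type} [Preorder I] {G : OrientedGraph V} (r : V → I)
    (hr : ∀ ⦃u v⦄, G.Adj u v → r u < r v) (ℓ : ℕ) : GirthAtLeast G ℓ := by
  rintro m hm - ⟨c, -, hadj⟩
  have : NeZero m := ⟨hm.ne'⟩
  obtain ⟨i, -, hi⟩ := Set.finite_univ.exists_maximalFor (r ∘ c) Set.univ Set.univ_nonempty
  have hlt : r (c i) < r (c (i + 1)) := hr (hadj i)
  exact hlt.not_ge (hi (Set.mem_univ _) hlt.le)

namespace OrientedGraph

variable {U V W I : Type}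

/-- The pullback of `G` along `f`, with an arc from `x` to `y` when `G` has one from `f x` to
`f y`. It transports an oriented graph on a finite type to one on `Fin m`. -/
def comap (f : U → V) (G : OrientedGraph V) : OrientedGraph U where
  Adj x y := G.Adj (f x) (f y)
  irrefl x := G.irrefl (f x)
  asymm x y := G.asymm (f x) (f y)

theorem isHom_comap (f : U → V) (G : OrientedGraph V) : IsHom (G.comap f) G f :=
  fun _ _ h => h

theorem isHom_comap_symm (e : V ≃ U) (G : OrientedGraph V) : IsHom G (G.comap e.symm) e :=
  fun _ _ h => by simpa only [comap, Equiv.symm_apply_apply] using h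

/-- The acyclic layering of `D` over `I`: the categorical product of `D` with the strict order on
`I`, so that every arc goes to a strictly larger layer. -/
def layered (D : OrientedGraph V) (I : Type) [Preorder I] : OrientedGraph (V × I) where
  Adj a b := D.Adj a.1 b.1 ∧ a.2 < b.2
  irrefl _ h := lt_irrefl _ h.2
  asymm _ _ h h' := lt_asymm h.2 h'.2

theorem isHom_fst_layered (D : OrientedGraph V) (I : Type) [Preorder I] :
    IsHom (D.layered I) D Prod.fst :=
  fun _ _ h => h.1

theorem girthAtLeast_layered (D : OrientedGraph V) (I : Type) [Preorder I] (ℓ : ℕ) :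
    GirthAtLeast (D.layered I) ℓ :=
  girthAtLeast_of_adj_imp_lt Prod.snd (fun u v (h : (D.layered I).Adj u v) => h.2) ℓ

variable {D : OrientedGraph V} {C : OrientedGraph W} {φ : V × I → W}

theorem isHom_layer_of_eq [Preorder I] (hφ : IsHom (D.layered I) C φ) {i j : I} (hij : i < j)
    (heq : (fun v => φ (v, i)) = fun v => φ (v, j)) : IsHom D C fun v => φ (v, i) := by
  intro x y hxy
  have harc : C.Adj (φ (x, i)) (φ (y, j)) := hφ ⟨hxy, hij⟩
  have hy : φ (y, i) = φ (y, j) := congrFun heq y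
  simpa only [hy] using harc

theorem layer_injective [LinearOrder I] (hDC : ¬ ∃ f : V → W, IsHom D C f)
    (hφ : IsHom (D.layered I) C φ) : Function.Injective fun (i : I) (v : V) => φ (v, i) :=
  Function.Injective.of_lt_imp_ne fun _ _ hij heq => hDC ⟨_, isHom_layer_of_eq hφ hij heq⟩

theorem not_colourable_layered [LinearOrder I] (hDC : ¬ ∃ f : V → W, IsHom D C f)
    (hI : Cardinal.mk (V → W) < Cardinal.mk I) : ¬ ∃ φ : V × I → W, IsHom (D.layered I) C φ :=
  fun ⟨_, hφ⟩ => hI.not_ge (Cardinal.mk_le_of_injective (layer_injective hDC hφ))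

end OrientedGraph

theorem erdos_type_corollary_general {V W : Type} [Finite V] [Finite W]
    (D : OrientedGraph V) (C : OrientedGraph W) (hDC : ¬ ∃ f : V → W, IsHom D C f) :
    ∃ (m : ℕ) (Dstar : OrientedGraph (Fin m)),
      (∀ ℓ : ℕ, GirthAtLeast Dstar ℓ) ∧
      (∃ ψ : Fin m → V, IsHom Dstar D ψ) ∧
      ¬ ∃ φ : Fin m → W, IsHom Dstar C φ := by
  let I := Fin (Nat.card (V → W) + 1)
  have hI : Cardinal.mk (V → W) < Cardinal.mk I := by
    rw [← Nat.cast_card, Cardinal.mk_fin]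
    exact_mod_cast Nat.lt_succ_self _
  let e : V × I ≃ Fin (Nat.card (V × I)) := Finite.equivFin (V × I)
  have hproj := (D.layered I).isHom_comap e.symm
  refine ⟨_, (D.layered I).comap e.symm, fun ℓ => ?girth, ?colourable, ?not_colourable⟩
  case girth => exact (D.girthAtLeast_layered I ℓ).of_injective_isHom hproj e.symm.injective
  case colourable => exact ⟨_, (D.isHom_fst_layered I).comp hproj⟩
  case not_colourable =>
    rintro ⟨φ, hφ⟩
    exact OrientedGraph.not_colourable_layered hDC hI
      ⟨_, hφ.comp ((D.layered I).isHom_comap_symm e)⟩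

/-- **Corollary 2.** If `D` and `C` are finite oriented graphs such that `D` is not
`C`-colourable, then for every positive integer `ℓ` there is a finite oriented graph `D*`
of girth at least `ℓ` that is `D`-colourable but not `C`-colourable. -/
theorem erdos_type_corollary {V W : Type} [Fintype V] [Fintype W]
    (D : OrientedGraph V) (C : OrientedGraph W)
    (hDC : ¬ ∃ f : V → W, IsHom D C f) (ℓ : ℕ) (hℓ : 0 < ℓ) :
    ∃ (m : ℕ) (Dstar : OrientedGraph (Fin m)),
      GirthAtLeast Dstar ℓ ∧
      (∃ ψ : Fin m → V, IsHom Dstar D ψ) ∧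
      ¬ ∃ φ : Fin m → W, IsHom Dstar C φ := by
  obtain ⟨m, Dstar, hgirth, hcolour⟩ := erdos_type_corollary_general D C hDC
  exact ⟨m, Dstar, hgirth ℓ, hcolour⟩
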